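/- arXiv:1511.09272 — 3 statements merged into one kernel-verified Lean document; each statement's English description precedes it below -/
import Mathlib

section
/- Every finite group G containing an involution (an element of order 2) contains a nontrivial element g such that 2·|C_G(g)|^3 ≥ |G|. -/
/-!
This is the Brauer–Fowler counting argument. Let `n = |G|`, let `t` be the number of involutions
and let `c` be the largest order of a centralizer of a nontrivial element, attained at `g`. The
conjugates of one involution already give `n ≤ c * t`. A product `x = u * v ≠ 1` of two involutions
is inverted by `u`, and the elements inverting `x` lie in a single coset of `C_G(x)`, so `x` has at
most `c` such factorizations; counting pairs of distinct involutions gives `t * (t - 1) ≤ c * n`.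
If `t ≥ 2`, then `t ^ 2 ≤ 2 * t * (t - 1)`, so `n ^ 2 ≤ c ^ 2 * t ^ 2 ≤ 2 * c ^ 3 * n`. If `t = 1`,
then `n ≤ c`.
-/

/-- A finite set that maps injectively into one left coset of `C_G(x)` has at most `|C_G(x)|`
elements. -/
lemma card_le_card_centralizer {G α : Type*} [Group G] [Finite G] (x : G) (F : Finset α)
    (f : α → G) (hf : Set.InjOn f F)
    (h : ∀ a ∈ F, ∀ b ∈ F, (f a)⁻¹ * f b ∈ Subgroup.centralizer {x}) :
    F.card ≤ Nat.card (Subgroup.centralizer {x}) := by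
  rcases F.eq_empty_or_nonempty with rfl | ⟨a, ha⟩
  · simp
  rw [← Nat.card_eq_finsetCard F]
  refine Nat.card_le_card_of_injective
    (fun b : F => (⟨(f a)⁻¹ * f b, h a ha b b.2⟩ : Subgroup.centralizer {x})) ?_
  intro b b' hbb
  exact Subtype.ext (hf b.2 b'.2 (mul_left_cancel (Subtype.ext_iff.mp hbb)))

/-- Every finite group `G` containing an involution contains a nontrivial element `g`
such that `2 * |C_G(g)|^3 ≥ |G|`. -/
theorem stmt_2 (G : Type*) [Group G] [Finite G]
    (hinv : ∃ i : G, i ≠ 1 ∧ i ^ 2 = 1) :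
    ∃ g : G, g ≠ 1 ∧ Nat.card G ≤ 2 * Nat.card (Subgroup.centralizer {g}) ^ 3 := by
  classical
  obtain ⟨i, hi1, hi2⟩ := hinv
  have := Fintype.ofFinite G
  obtain ⟨g, hg, hmax⟩ := Finset.exists_max_image (Finset.univ.erase (1 : G))
    (fun x => Nat.card (Subgroup.centralizer {x})) ⟨i, by simp [hi1]⟩
  refine ⟨g, (Finset.mem_erase.mp hg).1, ?_⟩
  set c := Nat.card (Subgroup.centralizer {g}) with hc
  have hc0 : 0 < c := Nat.card_pos
  let S : Finset G := {u | u ≠ 1 ∧ u ^ 2 = 1}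
  have hS : ∀ u, u ∈ S ↔ u ≠ 1 ∧ u ^ 2 = 1 := fun u => by simp [S]
  have hSinv : ∀ u ∈ S, u⁻¹ = u := fun u hu =>
    inv_eq_of_mul_eq_one_left (by rw [← pow_two]; exact ((hS u).1 hu).2)
  have h1 : (Finset.univ : Finset G).card ≤ c * S.card := by
    refine Finset.card_le_mul_card_image_of_maps_to (f := fun x => x * i * x⁻¹) ?_ c ?_
    · intro x _
      rw [hS]
      refine ⟨fun h => hi1 (conj_eq_one_iff.mp h), ?_⟩
      rw [conj_pow, hi2]; simp
    · intro y _
      refine (card_le_card_centralizer i _ id Function.injective_id.injOn ?_).trans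
        (hmax i (by simp [hi1]))
      intro a ha b hb
      have hab : a * i * a⁻¹ = b * i * b⁻¹ :=
        (Finset.mem_filter.mp ha).2.trans (Finset.mem_filter.mp hb).2.symm
      rw [Subgroup.mem_centralizer_singleton_iff]
      calc a⁻¹ * b * i = a⁻¹ * (b * i * b⁻¹) * b := by group
        _ = i * (a⁻¹ * b) := by rw [← hab]; group
  have h2 : S.offDiag.card ≤ c * (Finset.univ.erase (1 : G)).card := by
    refine Finset.card_le_mul_card_image_of_maps_to (f := fun p => p.1 * p.2) ?_ c ?_
    · rintro ⟨u, v⟩ hp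
      obtain ⟨hu, hv, huv⟩ := Finset.mem_offDiag.mp hp
      refine Finset.mem_erase.mpr ⟨fun h => huv ?_, Finset.mem_univ _⟩
      rw [← hSinv v hv]
      exact eq_inv_of_mul_eq_one_left h
    · intro x hx
      refine (card_le_card_centralizer x _ Prod.fst ?_ ?_).trans (hmax x hx)
      · rintro ⟨u, v⟩ hp ⟨u', v'⟩ hp' (rfl : u = u')
        have e : u * v = u * v' :=
          (Finset.mem_filter.mp hp).2.trans (Finset.mem_filter.mp hp').2.symm
        rw [mul_left_cancel e]
      · -- each first factor conjugates `x` to `x⁻¹`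
        have key : ∀ p ∈ S.offDiag.filter (fun p => p.1 * p.2 = x), p.1 * x * p.1⁻¹ = x⁻¹ := by
          rintro ⟨u, v⟩ hp
          obtain ⟨hmem, rfl⟩ := Finset.mem_filter.mp hp
          obtain ⟨hu, hv, -⟩ := Finset.mem_offDiag.mp hmem
          have hu2 : u * u = 1 := by rw [← pow_two]; exact ((hS u).1 hu).2
          change u * (u * v) * u⁻¹ = (u * v)⁻¹
          rw [mul_inv_rev, hSinv v hv, ← mul_assoc u u v, hu2, one_mul]
        intro a ha b hb
        have hab := (key a ha).trans (key b hb).symm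
        rw [Subgroup.mem_centralizer_singleton_iff]
        calc a.1⁻¹ * b.1 * x = a.1⁻¹ * (b.1 * x * b.1⁻¹) * b.1 := by group
          _ = x * (a.1⁻¹ * b.1) := by rw [← hab]; group
  rw [Finset.offDiag_card] at h2
  have h3 : (Finset.univ.erase (1 : G)).card ≤ Nat.card G := by
    rw [Nat.card_eq_fintype_card]; exact Finset.card_le_univ _
  rw [Finset.card_univ, ← Nat.card_eq_fintype_card] at h1
  have hn : 0 < Nat.card G := Nat.card_pos
  have h4 := h2.trans (Nat.mul_le_mul_left c h3)
  generalize Nat.card G = n at *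
  generalize S.card = t at *
  clear_value c
  rcases Nat.lt_or_ge t 2 with ht | ht
  · have hcn : n ≤ c := h1.trans (by nlinarith)
    have := Nat.le_self_pow (n := 3) (by norm_num) c
    omega
  · have h5 : t * t ≤ 2 * (c * n) := by
      have : 2 * t ≤ t * t := Nat.mul_le_mul_right t ht
      omega
    refine Nat.le_of_mul_le_mul_right ?_ hn
    calc n * n ≤ (c * t) * (c * t) := Nat.mul_le_mul h1 h1
      _ = c * c * (t * t) := by ring
      _ ≤ c * c * (2 * (c * n)) := Nat.mul_le_mul_left _ h5
      _ = 2 * c ^ 3 * n := by ring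
end

section
/- (B. H. Neumann's theorem, used for the almost centre) Let G be a group and n a natural number such that every conjugacy class of G has at most n elements (equivalently, [G : C_G(g)] ≤ n for every g ∈ G). Then the commutator subgroup [G, G] is finite. -/
/-!
By Schur's theorem, which Mathlib provides, it is enough to show that `G` has only finitely many
commutators. Neumann's argument for this runs as follows. Choose `a` whose conjugacy class `A` has
the largest possible size, and for each `b ∈ A` an element `t b` conjugating `a` to `b`. The
subgroup `U` of elements commuting with every `t b` has finite index. For `u ∈ U` the class of
`a * u` contains `A * u`, hence equals it by maximality of `A`. Comparing `x (a u) x⁻¹` with an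
element of `A * u` shows `x u x⁻¹ u⁻¹ ∈ A⁻¹ * A`, a finite set independent of `u` and `x`. Writing
an arbitrary `g` as `r * u` with `r` in a finite set of coset representatives,
`⁅x, g⁆ = (x r x⁻¹) (x u x⁻¹ u⁻¹) r⁻¹` leaves finitely many values.
-/

open scoped Pointwise

/-- The conjugacy class of `g`, as the set of all `x * g * x⁻¹`. -/
def conjClass {G : Type*} [Group G] (g : G) : Set G :=
  Set.range fun x : G => x * g * x⁻¹

theorem ncard_conjClass {G : Type*} [Group G] (g : G) :
    (conjClass g).ncard = (Subgroup.centralizer {g}).index := by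
  have h := MulAction.index_stabilizer (ConjAct G) g
  rw [ConjAct.stabilizer_eq_centralizer] at h
  exact h.symm

theorem finite_conjClass {G : Type*} [Group G] {g : G}
    (hg : (Subgroup.centralizer {g}).index ≠ 0) : (conjClass g).Finite :=
  Set.finite_of_ncard_ne_zero (by rwa [ncard_conjClass])

/-- Commutators with one entry in a suitable finite-index subgroup `U` take finitely many values,
because some class `A` has maximal size and `A⁻¹ * A` contains all of them. -/
theorem exists_finiteIndex_finite_commutators {G : Type*} [Group G] (n : ℕ)
    (h : ∀ g : G, (Subgroup.centralizer {g}).index ≠ 0 ∧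
      (Subgroup.centralizer {g}).index ≤ n) :
    ∃ U : Subgroup G, U.FiniteIndex ∧ ∃ F : Set G, F.Finite ∧
      ∀ u ∈ U, ∀ x : G, x * u * x⁻¹ * u⁻¹ ∈ F := by
  have hfin : ∀ g : G, (conjClass g).Finite := fun g => finite_conjClass (h g).1
  obtain ⟨a, ha⟩ : ∃ a : G, ∀ g : G, (conjClass g).ncard ≤ (conjClass a).ncard := by
    have hb : (Set.range fun g : G => (conjClass g).ncard).Finite :=
      (Set.finite_Iic n).subset (by
        rintro _ ⟨g, rfl⟩
        exact (ncard_conjClass g).trans_le (h g).2)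
    obtain ⟨_, ⟨a, rfl⟩, ha⟩ := Set.exists_max_image _ id hb ⟨_, 1, rfl⟩
    exact ⟨a, fun g => ha _ ⟨g, rfl⟩⟩
  have := (hfin a).to_subtype
  choose t ht using fun b : conjClass a => b.2
  have := fun b : conjClass a => Subgroup.FiniteIndex.mk (h (t b)).1
  refine ⟨⨅ b : conjClass a, Subgroup.centralizer {t b},
    Subgroup.finiteIndex_iInf this, (conjClass a)⁻¹ * conjClass a,
    (hfin a).inv.mul (hfin a), fun u hu x => ?_⟩
  have hcomm : ∀ b, t b * u = u * t b := fun b =>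
    Subgroup.mem_centralizer_singleton_iff.1 (Subgroup.mem_iInf.1 hu b) |>.symm
  have hsub : Set.image (fun b => b * u) (conjClass a) ⊆ conjClass (a * u) := by
    rintro _ ⟨b, hb, rfl⟩
    refine ⟨t ⟨b, hb⟩, ?_⟩
    have h1 : t ⟨b, hb⟩ * a * (t ⟨b, hb⟩)⁻¹ = b := ht ⟨b, hb⟩
    have h2 : u * (t ⟨b, hb⟩)⁻¹ = (t ⟨b, hb⟩)⁻¹ * u :=
      (Commute.inv_left (hcomm ⟨b, hb⟩)).symm
    change t ⟨b, hb⟩ * (a * u) * (t ⟨b, hb⟩)⁻¹ = b * u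
    rw [← mul_assoc, mul_assoc _ u, h2, ← mul_assoc, h1]
  -- Right translation is injective, so the inclusion is an equality by maximality of the class.
  have heq := Set.eq_of_subset_of_ncard_le hsub
    (by rw [Set.ncard_image_of_injective _ (mul_left_injective u)]; exact ha _) (hfin _)
  have hx : x * (a * u) * x⁻¹ ∈ conjClass (a * u) := ⟨x, rfl⟩
  rw [← heq] at hx
  obtain ⟨b, hb, hbx⟩ := hx
  refine Set.mem_mul.2 ⟨(x * a * x⁻¹)⁻¹, Set.inv_mem_inv.2 ⟨x, rfl⟩, b, hb, ?_⟩
  rw [eq_mul_inv_of_mul_eq hbx]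
  group

/-- B. H. Neumann's theorem: if every conjugacy class of `G` has at most `n`
elements, then the commutator subgroup of `G` is finite. -/
theorem stmt_9 (G : Type*) [Group G] (n : ℕ)
    (h : ∀ g : G, (Subgroup.centralizer {g}).index ≠ 0 ∧
      (Subgroup.centralizer {g}).index ≤ n) :
    Finite (commutator G) := by
  obtain ⟨U, hU, F, hF, hUF⟩ := exists_finiteIndex_finite_commutators n h
  -- Schur's theorem reduces the claim to finiteness of the set of commutators.
  suffices hfin : (commutatorSet G).Finite by
    have := hfin.to_subtype
    infer_instance
  refine (Set.finite_iUnion fun q : G ⧸ U =>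
    ((finite_conjClass (h q.out).1).mul hF).mul (Set.finite_singleton (q.out)⁻¹)).subset ?_
  rintro _ ⟨x, g, rfl⟩
  obtain ⟨u, hu⟩ := QuotientGroup.mk_out_eq_mul U g
  refine Set.mem_iUnion.2 ⟨(g : G ⧸ U), ?_⟩
  rw [hu]
  refine Set.mem_mul.2 ⟨_, Set.mul_mem_mul ⟨x, rfl⟩ (hUF _ (inv_mem u.2) x), _, rfl, ?_⟩
  rw [commutatorElement_def]
  group
end

section
/- Let G be a group whose commutator subgroup G' = [G, G] is finite. Then the centralizer H = C_G(G') has finite index in G, the commutator subgroup [H, H] is finite, and [H, H] is contained in the center of H (so H is (finite central)-by-abelian, and in particular nilpotent of class at most 2 and solvable). -/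
/-!
`G` acts on the finite normal subgroup `[G, G]` by conjugation, and the kernel of
`G →* MulAut [G, G]` lies in `H = C_G([G, G])`; the target is finite, so `H` has finite index.
The inclusion `H → G` sends `[H, H]` injectively into `[G, G]`, which gives finiteness, and
every element of `H` commutes with `[G, G]`, which gives centrality.
-/

lemma ker_conjNormal_le_centralizer {G : Type*} [Group G] (N : Subgroup G) [N.Normal] :
    (MulAut.conjNormal (H := N)).ker ≤ Subgroup.centralizer (N : Set G) := by
  intro g hg
  rw [Subgroup.mem_centralizer_iff]
  intro n hn
  have h := congrArg Subtype.val (DFunLike.congr_fun (MonoidHom.mem_ker.mp hg) ⟨n, hn⟩)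
  rw [MulAut.conjNormal_apply] at h
  exact (mul_inv_eq_iff_eq_mul.mp h).symm

lemma coe_mem_commutator {G : Type*} [Group G] (H : Subgroup G) {x : H}
    (hx : x ∈ commutator H) : (x : G) ∈ commutator G := by
  have h : (commutator H).map H.subtype ≤ commutator G := by
    rw [commutator_def, commutator_def, Subgroup.map_commutator]
    exact Subgroup.commutator_mono le_top le_top
  exact h (Subgroup.mem_map_of_mem H.subtype hx)

/-- If the commutator subgroup of `G` is finite, then `H = C_G([G,G])` has finite index
in `G`, the commutator subgroup of `H` is finite, and it is contained in the center
of `H`. -/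
theorem stmt_11 (G : Type*) [Group G] (hfin : Finite (commutator G)) :
    (Subgroup.centralizer (commutator G : Set G)).index ≠ 0 ∧
    Finite (commutator ↥(Subgroup.centralizer (commutator G : Set G))) ∧
    commutator ↥(Subgroup.centralizer (commutator G : Set G)) ≤
      Subgroup.center ↥(Subgroup.centralizer (commutator G : Set G)) := by
  refine ⟨?_, ?_, ?_⟩
  · have : Finite (MulAut (commutator G)) :=
      Finite.of_injective (fun f : MulAut (commutator G) => (f : commutator G → commutator G))
        DFunLike.coe_injective
    exact (Subgroup.finiteIndex_of_le
      (ker_conjNormal_le_centralizer (commutator G))).index_ne_zero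
  · refine Finite.of_injective
      (fun x => (⟨x.1.1, coe_mem_commutator _ x.2⟩ : commutator G)) ?_
    intro x y h
    exact Subtype.ext (Subtype.ext (Subtype.mk.inj h))
  · intro x hx
    rw [Subgroup.mem_center_iff]
    intro y
    exact Subtype.ext
      (Subgroup.mem_centralizer_iff.mp y.2 x.1 (coe_mem_commutator _ hx)).symm
end
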